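/- Let μ₁, μ₂, ν be finite Borel measures on ℝ with finite first moments such that μ₁ + μ₂ ≤_pcd ν. Then μ₂ ≤_pcd ν − S^ν(μ₁), and the shadows satisfy the additivity S^ν(μ₁ + μ₂) = S^ν(μ₁) + S^{ν − S^ν(μ₁)}(μ₂). -/

import Mathlib

/-!
The proof works with put functions `put μ t = ∫ (t - s)⁺ dμ(s)`. For measures with finite first
moment, `μ ≤_pcd ν` means that `put μ ≤ put ν` and that the mass of `μ` is at most that of `ν`, and
`μ ≤_cd ν` means the same with equal masses (`pcdOrder_of_put_le`, `cdOrder_of_put_le`). A measure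
is determined by its put function (`eq_of_lput_eq`), and every convex function vanishing at `-∞` is
a put function (`exists_measure_lput_eq`).

A measure `θ ≤ ν` with `μ ≤_cd θ` thus yields a convex minorant `put (ν - θ)` of `put ν - put μ`,
and the smallest such `θ` corresponds to the largest convex minorant:
`put (ν - S^ν(μ)) = conv (put ν - put μ)`, where `conv` is the convex envelope. That this formula
defines a measure `S^ν(μ) ≤ ν` amounts to the convexity of `g - conv (g - f)` for convex `g` and `f`
(`convexOn_sub_convexEnvelope`), applied to `g = put ν` and `f = put μ`
(`exists_shadow_decomposition`).

Both claims of the theorem then follow from the maximality of the envelope. If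
`μ₁ + μ₂ ≤_pcd ν`, then `put μ₂` is a convex minorant of `put ν - put μ₁`, hence of
`put (ν - S^ν(μ₁))`. If `k` is a convex minorant of `put ν - put μ₁ - put μ₂`, then `k + put μ₂` is
a convex minorant of `put ν - put μ₁`, hence of its envelope; therefore
`conv (put ν - put μ₁ - put μ₂) = conv (conv (put ν - put μ₁) - put μ₂)`, which is the additivity.
-/

open MeasureTheory Set
open scoped ENNReal

noncomputable section

/-- A finite Borel measure on ℝ with finite first moment. -/
def FiniteFirstMoment (μ : Measure ℝ) : Prop :=
  IsFiniteMeasure μ ∧ Integrable (fun x : ℝ => x) μ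

/-- Linear growth of a real function. -/
def LinearGrowth (φ : ℝ → ℝ) : Prop :=
  ∃ C : ℝ, ∀ x : ℝ, |φ x| ≤ C * (1 + |x|)

/-- Convex-decreasing (second stochastic) order `μ ≤_cd ν`. -/
def CDOrder (μ ν : Measure ℝ) : Prop :=
  ∀ φ : ℝ → ℝ, ConvexOn ℝ Set.univ φ → Antitone φ → LinearGrowth φ →
    ∫ x, φ x ∂μ ≤ ∫ x, φ x ∂ν

/-- Positive-convex-decreasing order `μ ≤_pcd ν`. -/
def PCDOrder (μ ν : Measure ℝ) : Prop :=
  ∀ φ : ℝ → ℝ, ConvexOn ℝ Set.univ φ → Antitone φ → (∀ x : ℝ, 0 ≤ φ x) →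
    LinearGrowth φ → ∫ x, φ x ∂μ ≤ ∫ x, φ x ∂ν

/-- Convex order `μ ≤_c ν`. -/
def COrder (μ ν : Measure ℝ) : Prop :=
  ∀ φ : ℝ → ℝ, ConvexOn ℝ Set.univ φ → LinearGrowth φ →
    ∫ x, φ x ∂μ ≤ ∫ x, φ x ∂ν

/-- `P` is a coupling of `μ` and `ν`. -/
def IsCoupling (P : Measure (ℝ × ℝ)) (μ ν : Measure ℝ) : Prop :=
  P.map Prod.fst = μ ∧ P.map Prod.snd = ν

/-- The supermartingale property of a measure on `ℝ × ℝ`. -/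
def SupermartingaleProperty (P : Measure (ℝ × ℝ)) : Prop :=
  ∀ A : Set ℝ, MeasurableSet A →
    ∫ p in A ×ˢ (Set.univ : Set ℝ), p.2 ∂P ≤ ∫ p in A ×ˢ (Set.univ : Set ℝ), p.1 ∂P

/-- `P ∈ S(μ,ν)`: supermartingale coupling. -/
def IsSupermartingaleCoupling (P : Measure (ℝ × ℝ)) (μ ν : Measure ℝ) : Prop :=
  IsCoupling P μ ν ∧ SupermartingaleProperty P

/-- `P|_{M×ℝ}` is a martingale. -/
def MartingaleOn (P : Measure (ℝ × ℝ)) (M : Set ℝ) : Prop :=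
  ∀ A : Set ℝ, MeasurableSet A → A ⊆ M →
    ∫ p in A ×ˢ (Set.univ : Set ℝ), p.2 ∂P = ∫ p in A ×ˢ (Set.univ : Set ℝ), p.1 ∂P

/-- `P ∈ M(μ,ν)`: martingale coupling. -/
def IsMartingaleCoupling (P : Measure (ℝ × ℝ)) (μ ν : Measure ℝ) : Prop :=
  IsCoupling P μ ν ∧ MartingaleOn P Set.univ

/-- `θ` is the shadow `S^ν(μ)` of `μ` in `ν`. -/
def IsShadow (μ ν θ : Measure ℝ) : Prop :=
  FiniteFirstMoment θ ∧ CDOrder μ θ ∧ θ ≤ ν ∧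
  ∀ θ' : Measure ℝ, FiniteFirstMoment θ' → CDOrder μ θ' → θ' ≤ ν → CDOrder θ θ'

/-- `P` is the Increasing Supermartingale Transport from `μ` to `ν`. -/
def IsIncreasingSMT (μ ν : Measure ℝ) (P : Measure (ℝ × ℝ)) : Prop :=
  IsSupermartingaleCoupling P μ ν ∧
  ∀ x : ℝ, ∃ θ : Measure ℝ, IsShadow (μ.restrict (Set.Iic x)) ν θ ∧
    ∀ A : Set ℝ, MeasurableSet A → P (Set.Iic x ×ˢ A) = θ A

/-- `P` is the Decreasing Supermartingale Transport from `μ` to `ν`. -/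
def IsDecreasingSMT (μ ν : Measure ℝ) (P : Measure (ℝ × ℝ)) : Prop :=
  IsSupermartingaleCoupling P μ ν ∧
  ∀ x : ℝ, ∃ θ : Measure ℝ, IsShadow (μ.restrict (Set.Ici x)) ν θ ∧
    ∀ A : Set ℝ, MeasurableSet A → P (Set.Ici x ×ˢ A) = θ A

/-- Relaxed supermartingale Spence–Mirrlees property. -/
def RelaxedSupermartingaleSM (f : ℝ × ℝ → ℝ) : Prop :=
  ∀ x₁ x₂ : ℝ, x₁ < x₂ →
    Antitone (fun y : ℝ => f (x₂, y) - f (x₁, y)) ∧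
    ConvexOn ℝ Set.univ (fun y : ℝ => f (x₂, y) - f (x₁, y))

/-- (Strict) supermartingale Spence–Mirrlees property. -/
def SupermartingaleSM (f : ℝ × ℝ → ℝ) : Prop :=
  ∀ x₁ x₂ : ℝ, x₁ < x₂ →
    StrictAnti (fun y : ℝ => f (x₂, y) - f (x₁, y)) ∧
    StrictConvexOn ℝ Set.univ (fun y : ℝ => f (x₂, y) - f (x₁, y))

/-- `f⁺` is `S(μ,ν)`-uniformly integrable. -/
def PosPartUnifInt (μ ν : Measure ℝ) (f : ℝ × ℝ → ℝ) : Prop :=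
  ∀ ε : ℝ, 0 < ε → ∃ N : ℝ, ∀ P : Measure (ℝ × ℝ),
    IsSupermartingaleCoupling P μ ν →
      ∫ p in {p : ℝ × ℝ | N < max (f p) 0}, max (f p) 0 ∂P ≤ ε

/-- First-order left monotonicity of `(Γ, M)`. -/
def FirstOrderLeftMonotone (Γ : Set (ℝ × ℝ)) (M : Set ℝ) : Prop :=
  ∀ x₁ y₁ x₂ y₂ : ℝ, (x₁, y₁) ∈ Γ → (x₂, y₂) ∈ Γ → x₁ < x₂ → x₂ ∉ M → y₁ ≤ y₂

/-- First-order right monotonicity of `(Γ, M)`. -/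
def FirstOrderRightMonotone (Γ : Set (ℝ × ℝ)) (M : Set ℝ) : Prop :=
  ∀ x₁ y₁ x₂ y₂ : ℝ, (x₁, y₁) ∈ Γ → (x₂, y₂) ∈ Γ → x₁ < x₂ → x₁ ∉ M → y₂ ≤ y₁

/-- Second-order left monotonicity of `Γ`. -/
def SecondOrderLeftMonotone (Γ : Set (ℝ × ℝ)) : Prop :=
  ∀ x y₁ y₂ x' y' : ℝ, (x, y₁) ∈ Γ → (x, y₂) ∈ Γ → (x', y') ∈ Γ →
    y₁ < y₂ → x < x' → y' ∉ Set.Ioo y₁ y₂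

/-- Second-order right monotonicity of `Γ`. -/
def SecondOrderRightMonotone (Γ : Set (ℝ × ℝ)) : Prop :=
  ∀ x y₁ y₂ x' y' : ℝ, (x, y₁) ∈ Γ → (x, y₂) ∈ Γ → (x', y') ∈ Γ →
    y₁ < y₂ → x' < x → y' ∉ Set.Ioo y₁ y₂

/-- Nondegeneracy of `(Γ, M)`. -/
def Nondegenerate (Γ : Set (ℝ × ℝ)) (M : Set ℝ) : Prop :=
  (∀ x y : ℝ, (x, y) ∈ Γ → x < y → ∃ y' : ℝ, y' < x ∧ (x, y') ∈ Γ) ∧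
  (∀ x y : ℝ, x ∈ M → (x, y) ∈ Γ → y < x → ∃ y' : ℝ, x < y' ∧ (x, y') ∈ Γ)

/-- The put function `p_μ`. -/
def put (μ : Measure ℝ) (t : ℝ) : ℝ := ∫ s, max (t - s) 0 ∂μ

/-- `x` is a barrier for the supermartingale transports from `μ` to `ν`. -/
def IsBarrier (μ ν : Measure ℝ) (x : ℝ) : Prop :=
  ∀ P : Measure (ℝ × ℝ), IsSupermartingaleCoupling P μ ν →
    P {p : ℝ × ℝ | p.1 ≤ x ∧ x < p.2} = 0 ∧ P {p : ℝ × ℝ | x ≤ p.1 ∧ p.2 < x} = 0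

/-- Barycenter of a finite measure (with `bary 0 = 0`). -/
def bary (θ : Measure ℝ) : ℝ := (∫ t, t ∂θ) / (θ Set.univ).toReal

open Filter
open scoped Topology

/-! ### Convex functions on the line -/

/-- A convex function on `ℝ` has a supporting line at every point. -/
lemma exists_support_line {k : ℝ → ℝ} (hk : ConvexOn ℝ univ k) (x : ℝ) :
    ∃ m : ℝ, ∀ y, k x + m * (y - x) ≤ k y := by
  have hx : x ∈ interior (univ : Set ℝ) := by simp
  refine ⟨derivWithin k (Ioi x) x, fun y => ?_⟩
  rcases lt_trichotomy y x with h | h | h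
  · have h1 := (hk.slope_le_leftDeriv_of_mem_interior (mem_univ y) hx h).trans
      (hk.leftDeriv_le_rightDeriv_of_mem_interior hx)
    rw [slope_def_field, div_le_iff₀ (by linarith)] at h1
    linarith
  · simp [h]
  · have h1 := hk.rightDeriv_le_slope_of_mem_interior hx (mem_univ y) h
    rw [slope_def_field, le_div_iff₀ (by linarith)] at h1
    linarith

/-- A convex function that is negative at `x` and nonnegative at `a` is nonnegative at every
point lying on the other side of `a`. -/
lemma convex_nonneg_of_neg {q : ℝ → ℝ} (hq : ConvexOn ℝ univ q) {x a y : ℝ}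
    (hx : q x < 0) (ha : 0 ≤ q a) (h : (y ≤ a ∧ a ≤ x) ∨ (x ≤ a ∧ a ≤ y)) : 0 ≤ q y := by
  by_contra! hy
  have hmem : a ∈ segment ℝ x y := by
    rw [segment_eq_uIcc]
    rcases h with h | h
    · exact ⟨(min_le_right _ _).trans h.1, h.2.trans (le_max_left _ _)⟩
    · exact ⟨(min_le_left _ _).trans h.1, h.2.trans (le_max_right _ _)⟩
  have := hq.le_on_segment (mem_univ x) (mem_univ y) hmem
  have := max_lt hx hy
  linarith

/-- The set of slope-intercept pairs of the affine functions lying below `F`. -/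
def affineMinorants (F : ℝ → ℝ) : Set (ℝ × ℝ) := {l | ∀ s, l.1 * s + l.2 ≤ F s}

/-- The convex envelope of `F`, as the supremum of the affine minorants of `F`. It is the largest
convex minorant as soon as `F` has some affine minorant. -/
def convexEnvelope (F : ℝ → ℝ) (t : ℝ) : ℝ :=
  sSup ((fun l : ℝ × ℝ => l.1 * t + l.2) '' affineMinorants F)

lemma le_convexEnvelope_of_affine {F : ℝ → ℝ} {a b : ℝ} (h : ∀ s, a * s + b ≤ F s) (t : ℝ) :
    a * t + b ≤ convexEnvelope F t := by
  refine le_csSup ⟨F t, ?_⟩ ⟨(a, b), h, rfl⟩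
  rintro _ ⟨l, hl, rfl⟩
  exact hl t

lemma convexEnvelope_le {F : ℝ → ℝ} {a b : ℝ} (h : ∀ s, a * s + b ≤ F s) (t : ℝ) :
    convexEnvelope F t ≤ F t := by
  refine csSup_le ⟨_, (a, b), h, rfl⟩ ?_
  rintro _ ⟨l, hl, rfl⟩
  exact hl t

lemma le_convexEnvelope {F k : ℝ → ℝ} (hk : ConvexOn ℝ univ k) (h : ∀ s, k s ≤ F s) (t : ℝ) :
    k t ≤ convexEnvelope F t := by
  obtain ⟨m, hm⟩ := exists_support_line hk t
  have := le_convexEnvelope_of_affine (F := F) (a := m) (b := k t - m * t)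
    (fun s => by linarith [hm s, h s]) t
  linarith

lemma convexOn_convexEnvelope {F : ℝ → ℝ} {a b : ℝ} (h : ∀ s, a * s + b ≤ F s) :
    ConvexOn ℝ univ (convexEnvelope F) := by
  refine ⟨convex_univ, fun x _ y _ u v hu hv huv => ?_⟩
  refine csSup_le ⟨_, (a, b), h, rfl⟩ ?_
  rintro _ ⟨l, hl, rfl⟩
  have hx := mul_le_mul_of_nonneg_left (le_convexEnvelope_of_affine hl x) hu
  have hy := mul_le_mul_of_nonneg_left (le_convexEnvelope_of_affine hl y) hv
  simp only [smul_eq_mul]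
  calc l.1 * (u * x + v * y) + l.2 = u * (l.1 * x + l.2) + v * (l.1 * y + l.2) := by
        linear_combination (-l.2) * huv
    _ ≤ _ := add_le_add hx hy

/-- If `g` and `f` are convex, so is `g - conv (g - f)`. Given `x < y` and the chord `ℓ` of
`p = g - conv (g - f)` over `[x, y]`, one has `f ≤ ℓ` on `[x, y]` because `f ≤ p` at the endpoints,
so the convex function `g - ℓ` lies below `g - f` there. If `p > ℓ` at some interior point, the
supporting line of `g - ℓ` at this point would be an affine minorant of `g - f` passing above the
convex envelope. -/
lemma convexOn_sub_convexEnvelope {g f : ℝ → ℝ} (hg : ConvexOn ℝ univ g)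
    (hf : ConvexOn ℝ univ f) {a b : ℝ} (h : ∀ s, a * s + b ≤ g s - f s) :
    ConvexOn ℝ univ (fun t => g t - convexEnvelope (fun s => g s - f s) t) := by
  set F : ℝ → ℝ := fun s => g s - f s with hF
  set c := convexEnvelope F with hc
  have hcF : ∀ t, c t ≤ g t - f t := fun t => convexEnvelope_le h t
  have hcc : ConvexOn ℝ univ c := convexOn_convexEnvelope h
  refine LinearOrder.convexOn_of_lt convex_univ fun x _ y _ hxy u v hu hv huv => ?_
  simp only [smul_eq_mul]
  set z := u * x + v * y with hz
  -- the chord has slope `m` and intercept `n`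
  obtain ⟨m, n, hmx, hmy⟩ : ∃ m n : ℝ, m * x + n = g x - c x ∧ m * y + n = g y - c y := by
    have hne : y - x ≠ 0 := by linarith
    refine ⟨((g y - c y) - (g x - c x)) / (y - x),
      (g x - c x) - ((g y - c y) - (g x - c x)) / (y - x) * x, by ring, ?_⟩
    field_simp
    ring
  rw [← hmx, ← hmy]
  have hzl : u * (m * x + n) + v * (m * y + n) = m * z + n := by
    rw [hz]; linear_combination n * huv
  rw [hzl]
  have hxz : x ≤ z := by
    have : z = x + v * (y - x) := by rw [hz]; linear_combination x * huv
    nlinarith [mul_pos hv (sub_pos.2 hxy)]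
  have hzy : z ≤ y := by
    have : z = y - u * (y - x) := by rw [hz]; linear_combination y * huv
    nlinarith [mul_pos hu (sub_pos.2 hxy)]
  by_contra! hcon
  have haff : ∀ p q : ℝ, ConvexOn ℝ univ (fun s : ℝ => p * s + q) := fun p q =>
    ⟨convex_univ, fun r _ s _ u v _ _ huv => le_of_eq (by
      simp only [smul_eq_mul]; linear_combination (-q) * huv)⟩
  have hk : ConvexOn ℝ univ (fun s => g s - (m * s + n)) := by
    have := hg.add (haff (-m) (-n))
    refine this.congr fun s _ => ?_
    simp only [Pi.add_apply]; ring
  obtain ⟨r, hr⟩ := exists_support_line hk z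
  have hfl : ∀ s, x ≤ s → s ≤ y → f s ≤ m * s + n := by
    intro s hxs hsy
    have hq : ConvexOn ℝ univ (fun s => f s + (-m * s + -n)) := hf.add (haff (-m) (-n))
    have hmem : s ∈ segment ℝ x y := by rw [segment_eq_Icc hxy.le]; exact ⟨hxs, hsy⟩
    have h1 := hq.le_on_segment (mem_univ x) (mem_univ y) hmem
    have h2 : max (f x + (-m * x + -n)) (f y + (-m * y + -n)) ≤ 0 :=
      max_le (by linarith [hcF x]) (by linarith [hcF y])
    linarith
  have hq : ConvexOn ℝ univ
      (fun s => c s + (-r * s + -(g z - (m * z + n) - r * z))) := hcc.add (haff _ _)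
  have hmin : ∀ s, r * s + (g z - (m * z + n) - r * z) ≤ F s := by
    intro s
    have hgen : 0 ≤ c s + (-r * s + -(g z - (m * z + n) - r * z)) →
        r * s + (g z - (m * z + n) - r * z) ≤ F s := fun h0 => by
      have := hcF s
      simp only [hF]; linarith
    rcases lt_or_ge s x with hsx | hsx
    · refine hgen (convex_nonneg_of_neg hq (x := z) (a := x) (by linarith)
        (by linarith [hr x]) (Or.inl ⟨hsx.le, hxz⟩))
    rcases lt_or_ge y s with hsy | hsy
    · refine hgen (convex_nonneg_of_neg hq (x := z) (a := y) (by linarith)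
        (by linarith [hr y]) (Or.inr ⟨hzy, hsy.le⟩))
    · have := hr s
      have := hfl s hsx hsy
      simp only [hF]; linarith
  have := le_convexEnvelope_of_affine hmin z
  linarith

/-! ### Measures with a prescribed put function -/

/-- The put function as an extended nonnegative integral; `ENNReal.ofReal` takes the positive
part. -/
def lput (μ : Measure ℝ) (t : ℝ) : ℝ≥0∞ := ∫⁻ s, ENNReal.ofReal (t - s) ∂μ

/-- By Tonelli, the put function is the primitive of the distribution function. -/
lemma lput_eq_setLIntegral (κ : Measure ℝ) [SFinite κ] (t : ℝ) :
    lput κ t = ∫⁻ u in Iic t, κ (Iic u) := by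
  have h1 : ∀ s : ℝ, ENNReal.ofReal (t - s) = ∫⁻ u in Iic t, (Ici s).indicator 1 u := by
    intro s
    rw [lintegral_indicator_one measurableSet_Ici, Measure.restrict_apply measurableSet_Ici,
      Ici_inter_Iic, Real.volume_Icc]
  have h2 : ∀ u : ℝ, κ (Iic u) = ∫⁻ s, (Ici s).indicator 1 u ∂κ := by
    intro u
    rw [← lintegral_indicator_one measurableSet_Iic]
    refine lintegral_congr fun s => ?_
    simp [indicator_apply]
  simp_rw [lput, h1, h2]
  refine lintegral_lintegral_swap (Measurable.aemeasurable ?_)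
  have : (Function.uncurry fun (s u : ℝ) => (Ici s).indicator (1 : ℝ → ℝ≥0∞) u) =
      {p : ℝ × ℝ | p.1 ≤ p.2}.indicator 1 := by
    ext p; simp [Function.uncurry, indicator_apply]
  rw [this]
  exact measurable_one.indicator (measurableSet_le measurable_fst measurable_snd)

/-- Every convex function vanishing at `-∞` is the put function of a measure, namely of the
Stieltjes measure of its right derivative. -/
lemma exists_measure_lput_eq {c : ℝ → ℝ} (hc : ConvexOn ℝ univ c)
    (h0 : Tendsto c atBot (𝓝 0)) :
    ∃ κ : Measure ℝ, SFinite κ ∧ ∀ t, lput κ t = ENNReal.ofReal (c t) := by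
  have hint : ∀ x : ℝ, x ∈ interior (univ : Set ℝ) := by simp
  set f : ℝ → ℝ := fun x => derivWithin c (Ioi x) x with hf
  have hmono : Monotone f := by
    have := hc.monotoneOn_rightDeriv
    rw [interior_univ] at this
    exact fun x y hxy => this (mem_univ x) (mem_univ y) hxy
  have hder : ∀ x, HasDerivWithinAt c (f x) (Ioi x) x := fun x =>
    hc.hasDerivWithinAt_rightDeriv_of_mem_interior (hint x)
  have hup : ∀ x, f x ≤ c (x + 1) - c x := fun x => by
    have := hc.rightDeriv_le_slope_of_mem_interior (hint x) (mem_univ (x + 1)) (by linarith)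
    simpa [slope_def_field] using this
  have hlow : ∀ x, c x - c (x - 1) ≤ f x := fun x => by
    have := (hc.slope_le_leftDeriv_of_mem_interior (mem_univ (x - 1)) (hint x)
      (by linarith)).trans (hc.leftDeriv_le_rightDeriv_of_mem_interior (hint x))
    simpa [slope_def_field] using this
  have hlim : Tendsto f atBot (𝓝 0) := by
    have e1 : Tendsto (fun x => c x - c (x - 1)) atBot (𝓝 0) := by
      simpa [sub_eq_add_neg] using h0.sub (h0.comp (tendsto_atBot_add_const_right atBot (-1 : ℝ) tendsto_id))
    have e2 : Tendsto (fun x => c (x + 1) - c x) atBot (𝓝 0) := by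
      simpa using (h0.comp (tendsto_atBot_add_const_right atBot (1 : ℝ) tendsto_id)).sub h0
    exact tendsto_of_tendsto_of_tendsto_of_le_of_le e1 e2 hlow hup
  have hpos : ∀ x, 0 ≤ f x := fun x => hmono.le_of_tendsto hlim x
  set C := hmono.stieltjesFunction with hC
  have hClim : Tendsto C atBot (𝓝 0) :=
    tendsto_of_tendsto_of_tendsto_of_le_of_le hlim
      (hlim.comp (tendsto_atBot_add_const_right atBot (1 : ℝ) tendsto_id))
      (fun x => hmono.le_rightLim le_rfl)
      (fun x => hmono.rightLim_le (by simp))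
  have hae : ∀ᵐ u : ℝ, C u = f u := by
    have hcount := hmono.countable_not_continuousAt
    rw [ae_iff]
    refine measure_mono_null (fun u hu => ?_) (hcount.measure_zero _)
    intro hcont
    exact hu (hmono.continuousWithinAt_Ioi_iff_rightLim_eq.1 hcont.continuousWithinAt)
  refine ⟨C.measure, inferInstance, fun t => ?_⟩
  rw [lput_eq_setLIntegral]
  have hmeas : ∀ s : Set ℝ, MeasurableSet s → ∫⁻ u in s, C.measure (Iic u) =
      (volume.withDensity fun u => ENNReal.ofReal (f u)) s := by
    intro s hs
    rw [withDensity_apply _ hs]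
    refine lintegral_congr_ae (ae_restrict_of_ae ?_)
    filter_upwards [hae] with u hu
    rw [C.measure_Iic hClim, sub_zero, hu]
  rw [hmeas _ measurableSet_Iic]
  refine tendsto_nhds_unique (tendsto_measure_Ioc_atBot _ _) ?_
  have hev : (fun a => (volume.withDensity fun u => ENNReal.ofReal (f u)) (Ioc a t))
      =ᶠ[atBot] fun a => ENNReal.ofReal (c t - c a) := by
    filter_upwards [eventually_le_atBot t] with a ha
    have hii : IntervalIntegrable f volume a t := hmono.intervalIntegrable
    rw [withDensity_apply _ measurableSet_Ioc,
      ← ofReal_integral_eq_lintegral_ofReal hii.1 (ae_of_all _ hpos),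
      ← intervalIntegral.integral_of_le ha,
      intervalIntegral.integral_eq_sub_of_hasDeriv_right
        ((hc.continuousOn isOpen_univ).mono (subset_univ _)) (fun x _ => hder x) hii]
  refine Tendsto.congr' hev.symm ?_
  have := ENNReal.tendsto_ofReal (h0.const_sub (c t))
  simpa using this

lemma lput_step_lower (κ : Measure ℝ) (t : ℝ) {h : ℝ} (hh : 0 ≤ h) :
    lput κ t + ENNReal.ofReal h * κ (Iic t) ≤ lput κ (t + h) := by
  rw [lput, lput, ← setLIntegral_const, ← lintegral_indicator measurableSet_Iic,
    ← lintegral_add_left (by fun_prop)]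
  refine lintegral_mono fun s => ?_
  by_cases hs : s ≤ t
  · simp only [mem_Iic, hs, indicator_of_mem]
    rw [← ENNReal.ofReal_add (by linarith) hh]
    exact ENNReal.ofReal_le_ofReal (by linarith)
  · simp only [mem_Iic, hs, not_false_eq_true, indicator_of_notMem, add_zero]
    exact ENNReal.ofReal_le_ofReal (by linarith)

lemma lput_step_upper (κ : Measure ℝ) (t : ℝ) (h : ℝ) :
    lput κ (t + h) ≤ lput κ t + ENNReal.ofReal h * κ (Iic (t + h)) := by
  rw [lput, lput, ← setLIntegral_const, ← lintegral_indicator measurableSet_Iic,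
    ← lintegral_add_left (by fun_prop)]
  refine lintegral_mono fun s => ?_
  by_cases hs : s ≤ t + h
  · simp only [mem_Iic, hs, indicator_of_mem]
    rw [show t + h - s = (t - s) + h by ring]
    exact ENNReal.ofReal_add_le
  · simp only [mem_Iic, hs, not_false_eq_true, indicator_of_notMem, add_zero]
    rw [ENNReal.ofReal_of_nonpos (by linarith)]
    exact zero_le

/-- Comparing the increments of the put function, with a step that tends to `0`. -/
lemma measure_Iic_le_of_lput_eq {κ ν : Measure ℝ} (hfin : ∀ t, ν (Iic t) ≠ ∞)
    (hput : ∀ t, lput ν t ≠ ∞) (h : ∀ t, lput κ t = lput ν t) (t : ℝ) :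
    κ (Iic t) ≤ ν (Iic t) := by
  have hstep : ∀ n : ℕ, κ (Iic t) ≤ ν (Iic (t + 1 / ((n : ℝ) + 1))) := by
    intro n
    have hn : (0 : ℝ) < 1 / ((n : ℝ) + 1) := Nat.one_div_pos_of_nat
    have h1 := (lput_step_lower κ t hn.le).trans
      ((h _).le.trans (lput_step_upper ν t (1 / ((n : ℝ) + 1))))
    rw [h t] at h1
    have h2 := (ENNReal.add_le_add_iff_left (hput t)).1 h1
    exact (ENNReal.mul_le_mul_iff_right (by simpa using hn) ENNReal.ofReal_ne_top).1 h2
  have hlim : Tendsto (fun n : ℕ => ν (Iic (t + 1 / ((n : ℝ) + 1)))) atTop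
      (𝓝 (ν (⋂ n : ℕ, Iic (t + 1 / ((n : ℝ) + 1))))) := by
    refine tendsto_measure_iInter_atTop (fun _ => measurableSet_Iic.nullMeasurableSet)
      (fun m n hmn => Iic_subset_Iic.2 ?_) ⟨0, hfin _⟩
    have := Nat.one_div_le_one_div (α := ℝ) hmn
    linarith
  have hInter : (⋂ n : ℕ, Iic (t + 1 / ((n : ℝ) + 1))) = Iic t := by
    ext s
    simp only [mem_iInter, mem_Iic]
    refine ⟨fun hs => ?_, fun hs n => ?_⟩
    · have := tendsto_one_div_add_atTop_nhds_zero_nat (𝕜 := ℝ)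
      exact ge_of_tendsto' (by simpa using this.const_add t) hs
    · have : (0 : ℝ) < 1 / ((n : ℝ) + 1) := Nat.one_div_pos_of_nat
      linarith
  rw [hInter] at hlim
  exact ge_of_tendsto' hlim hstep

/-- A measure is determined by its put function. -/
lemma eq_of_lput_eq {κ ν : Measure ℝ} [IsFiniteMeasure ν] (hput : ∀ t, lput ν t ≠ ∞)
    (h : ∀ t, lput κ t = lput ν t) : κ = ν := by
  have hle := measure_Iic_le_of_lput_eq (fun t => measure_ne_top ν _) hput h
  have : IsFiniteMeasure κ := by
    refine ⟨lt_of_le_of_lt ?_ (measure_lt_top ν univ)⟩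
    exact le_of_tendsto' (tendsto_measure_Iic_atTop κ)
      fun t => (hle t).trans (measure_mono (subset_univ _))
  refine Measure.ext_of_Iic κ ν fun t => le_antisymm (hle t) ?_
  exact measure_Iic_le_of_lput_eq (fun t => measure_ne_top κ _) (fun t => h t ▸ hput t)
    (fun t => (h t).symm) t

/-! ### Put functions and the orders -/

lemma FiniteFirstMoment.integrable_of_linearGrowth {μ : Measure ℝ} (hμ : FiniteFirstMoment μ)
    {φ : ℝ → ℝ} (hc : Continuous φ) (hφ : LinearGrowth φ) : Integrable φ μ := by
  obtain ⟨C, hC⟩ := hφ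
  have := hμ.1
  exact Integrable.mono' (((integrable_const (1 : ℝ)).add hμ.2.abs).const_mul C)
    hc.aestronglyMeasurable (ae_of_all _ fun x => by simpa using hC x)

lemma FiniteFirstMoment.mono {μ ν : Measure ℝ} (hν : FiniteFirstMoment ν) (h : μ ≤ ν) :
    FiniteFirstMoment μ :=
  have := hν.1
  ⟨isFiniteMeasure_of_le ν h, hν.2.mono_measure h⟩

lemma FiniteFirstMoment.add {μ ν : Measure ℝ} (hμ : FiniteFirstMoment μ)
    (hν : FiniteFirstMoment ν) : FiniteFirstMoment (μ + ν) :=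
  have := hμ.1
  have := hν.1
  ⟨inferInstance, hμ.2.add_measure hν.2⟩

lemma continuous_of_convexOn {φ : ℝ → ℝ} (h : ConvexOn ℝ univ φ) : Continuous φ :=
  continuousOn_univ.1 (h.continuousOn isOpen_univ)

lemma convexOn_payoff (t : ℝ) : ConvexOn ℝ univ (fun s : ℝ => max (t - s) 0) := by
  have h1 : ConvexOn ℝ univ (fun s : ℝ => t - s) :=
    (convexOn_const t convex_univ).sub (concaveOn_id convex_univ)
  exact h1.sup (convexOn_const 0 convex_univ)

lemma antitone_payoff (t : ℝ) : Antitone (fun s : ℝ => max (t - s) 0) :=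
  fun _ _ h => max_le_max (by linarith) le_rfl

lemma linearGrowth_payoff (t : ℝ) : LinearGrowth (fun s : ℝ => max (t - s) 0) := by
  refine ⟨1 + |t|, fun x => ?_⟩
  rw [abs_of_nonneg (le_max_right _ _)]
  refine max_le ?_ (by positivity)
  nlinarith [le_abs_self t, neg_abs_le x, abs_nonneg t, abs_nonneg x,
    mul_nonneg (abs_nonneg t) (abs_nonneg x)]

lemma linearGrowth_const (a : ℝ) : LinearGrowth (fun _ : ℝ => a) :=
  ⟨|a|, fun x => by nlinarith [abs_nonneg a, mul_nonneg (abs_nonneg a) (abs_nonneg x)]⟩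

section Put

variable {μ ν : Measure ℝ}

lemma FiniteFirstMoment.integrable_payoff (hμ : FiniteFirstMoment μ) (t : ℝ) :
    Integrable (fun s : ℝ => max (t - s) 0) μ :=
  hμ.integrable_of_linearGrowth (by fun_prop) (linearGrowth_payoff t)

lemma put_nonneg (μ : Measure ℝ) (t : ℝ) : 0 ≤ put μ t :=
  integral_nonneg fun _ => le_max_right _ _

lemma lput_eq_ofReal_put (hμ : FiniteFirstMoment μ) (t : ℝ) :
    lput μ t = ENNReal.ofReal (put μ t) := by
  rw [put, ofReal_integral_eq_lintegral_ofReal (hμ.integrable_payoff t)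
    (ae_of_all _ fun _ => le_max_right _ _)]
  refine lintegral_congr fun s => ?_
  rw [ENNReal.ofReal_max]
  simp

lemma put_add (hμ : FiniteFirstMoment μ) (hν : FiniteFirstMoment ν) (t : ℝ) :
    put (μ + ν) t = put μ t + put ν t :=
  integral_add_measure (hμ.integrable_payoff t) (hν.integrable_payoff t)

lemma convexOn_put (hμ : FiniteFirstMoment μ) : ConvexOn ℝ univ (put μ) := by
  refine ⟨convex_univ, fun x _ y _ u v hu hv huv => ?_⟩
  simp only [smul_eq_mul, put]
  rw [← integral_const_mul, ← integral_const_mul, ← integral_add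
    ((hμ.integrable_payoff x).const_mul u) ((hμ.integrable_payoff y).const_mul v)]
  refine integral_mono (hμ.integrable_payoff _)
    (((hμ.integrable_payoff x).const_mul u).add ((hμ.integrable_payoff y).const_mul v))
    fun s => ?_
  have h1 := mul_le_mul_of_nonneg_left (le_max_left (x - s) 0) hu
  have h2 := mul_le_mul_of_nonneg_left (le_max_left (y - s) 0) hv
  refine max_le ?_ (add_nonneg (mul_nonneg hu (le_max_right _ _))
    (mul_nonneg hv (le_max_right _ _)))
  have : u * x + v * y - s = u * (x - s) + v * (y - s) := by linear_combination s * huv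
  rw [this]
  exact add_le_add h1 h2

lemma tendsto_put_atBot (hμ : FiniteFirstMoment μ) : Tendsto (put μ) atBot (𝓝 0) := by
  have : Tendsto (fun t : ℝ => ∫ s, max (t - s) 0 ∂μ) atBot (𝓝 (∫ _, (0 : ℝ) ∂μ)) := by
    refine tendsto_integral_filter_of_dominated_convergence (fun s => |s|)
      (Eventually.of_forall fun t => (hμ.integrable_payoff t).aestronglyMeasurable) ?_
      hμ.2.abs ?_
    · filter_upwards [eventually_le_atBot 0] with t ht
      refine ae_of_all _ fun s => ?_
      rw [Real.norm_of_nonneg (le_max_right _ _)]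
      exact max_le (by linarith [neg_abs_le s]) (abs_nonneg s)
    · refine ae_of_all _ fun s => tendsto_const_nhds.congr' ?_
      filter_upwards [eventually_le_atBot s] with t ht
      exact (max_eq_right (by linarith)).symm
  rwa [integral_zero] at this

lemma put_lower (hμ : FiniteFirstMoment μ) (t : ℝ) :
    μ.real univ * t - ∫ s, |s| ∂μ ≤ put μ t := by
  have := hμ.1
  have h1 : ∫ s, (t - |s|) ∂μ = μ.real univ * t - ∫ s, |s| ∂μ := by
    rw [integral_sub (integrable_const t) hμ.2.abs, integral_const, smul_eq_mul]
  rw [← h1]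
  exact integral_mono ((integrable_const t).sub hμ.2.abs) (hμ.integrable_payoff t)
    fun s => le_max_of_le_left (by linarith [le_abs_self s])

lemma put_upper (hμ : FiniteFirstMoment μ) {t : ℝ} (ht : 0 ≤ t) :
    put μ t ≤ μ.real univ * t + ∫ s, |s| ∂μ := by
  have := hμ.1
  have h1 : ∫ s, (t + |s|) ∂μ = μ.real univ * t + ∫ s, |s| ∂μ := by
    rw [integral_add (integrable_const t) hμ.2.abs, integral_const, smul_eq_mul]
  rw [← h1]
  exact integral_mono (hμ.integrable_payoff t) ((integrable_const t).add hμ.2.abs)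
    fun s => max_le (by linarith [neg_abs_le s]) (by positivity)

lemma PCDOrder.mass_le (h : PCDOrder μ ν) : μ.real univ ≤ ν.real univ := by
  have := h (fun _ => 1) (convexOn_const 1 convex_univ) antitone_const (fun _ => zero_le_one)
    (linearGrowth_const 1)
  simpa using this

lemma PCDOrder.put_le (h : PCDOrder μ ν) (t : ℝ) : put μ t ≤ put ν t :=
  h _ (convexOn_payoff t) (antitone_payoff t) (fun _ => le_max_right _ _) (linearGrowth_payoff t)

lemma CDOrder.pcd (h : CDOrder μ ν) : PCDOrder μ ν := fun φ h1 h2 _ h3 => h φ h1 h2 h3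

lemma CDOrder.mass_eq (h : CDOrder μ ν) : μ.real univ = ν.real univ := by
  refine le_antisymm h.pcd.mass_le ?_
  have := h (fun _ => -1) (convexOn_const _ convex_univ) antitone_const (linearGrowth_const _)
  simpa using this

/-- Up to its limit at `+∞`, a nonnegative convex nonincreasing function is a mixture of the
payoffs `x ↦ (t - x)⁺`, so that mass and put function control the order. -/
lemma pcdOrder_of_put_le (hμ : FiniteFirstMoment μ) (hν : FiniteFirstMoment ν)
    (hmass : μ.real univ ≤ ν.real univ) (hput : ∀ t, put μ t ≤ put ν t) : PCDOrder μ ν := by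
  intro φ hconv hanti hpos hlin
  have := hμ.1
  have := hν.1
  have hcont := continuous_of_convexOn hconv
  have hbdd : BddBelow (range φ) := ⟨0, by rintro _ ⟨x, rfl⟩; exact hpos x⟩
  set l := ⨅ x, φ x with hl
  have hl0 : 0 ≤ l := le_ciInf hpos
  have hle : ∀ x, l ≤ φ x := ciInf_le hbdd
  have hlim : Tendsto φ atTop (𝓝 l) := tendsto_atTop_ciInf hanti hbdd
  have hc : ConvexOn ℝ univ (fun t => φ (-t) - l) := by
    refine ⟨convex_univ, fun x _ y _ u v hu hv huv => ?_⟩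
    have := hconv.2 (mem_univ (-x)) (mem_univ (-y)) hu hv huv
    simp only [smul_eq_mul] at this ⊢
    rw [show -(u * x + v * y) = u * -x + v * -y by ring]
    calc _ ≤ u * φ (-x) + v * φ (-y) - l := by linarith
      _ = _ := by linear_combination l * huv
  have hc0 : Tendsto (fun t => φ (-t) - l) atBot (𝓝 0) := by
    simpa using (hlim.comp tendsto_neg_atBot_atTop).sub_const l
  obtain ⟨κ, hκ, hκc⟩ := exists_measure_lput_eq hc hc0
  have key : ∀ ρ : Measure ℝ, FiniteFirstMoment ρ →
      ENNReal.ofReal (∫ x, (φ x - l) ∂ρ) = ∫⁻ s, lput ρ (-s) ∂κ := by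
    intro ρ hρ
    have := hρ.1
    rw [ofReal_integral_eq_lintegral_ofReal (f := fun x => φ x - l)
      ((hρ.integrable_of_linearGrowth hcont hlin).sub (integrable_const l))
      (ae_of_all _ fun x => sub_nonneg.2 (hle x))]
    have h1 : ∀ x, ENNReal.ofReal (φ x - l) = ∫⁻ s, ENNReal.ofReal (-s - x) ∂κ := by
      intro x
      have := hκc (-x)
      rw [neg_neg] at this
      rw [← this, lput]
      refine lintegral_congr fun s => ?_
      rw [show -x - s = -s - x by ring]
    simp_rw [h1, lput]
    exact lintegral_lintegral_swap (Measurable.aemeasurable (by fun_prop))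
  have hsub : ∀ ρ : Measure ℝ, FiniteFirstMoment ρ →
      ∫ x, φ x ∂ρ = ∫ x, (φ x - l) ∂ρ + ρ.real univ * l := by
    intro ρ hρ
    have := hρ.1
    rw [integral_sub (hρ.integrable_of_linearGrowth hcont hlin) (integrable_const l),
      integral_const, smul_eq_mul]
    ring
  have hmain : ∫ x, (φ x - l) ∂μ ≤ ∫ x, (φ x - l) ∂ν := by
    rw [← ENNReal.ofReal_le_ofReal_iff (integral_nonneg fun x => sub_nonneg.2 (hle x)),
      key μ hμ, key ν hν]
    refine lintegral_mono fun s => ?_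
    rw [lput_eq_ofReal_put hμ, lput_eq_ofReal_put hν]
    exact ENNReal.ofReal_le_ofReal (hput _)
  rw [hsub μ hμ, hsub ν hν]
  exact add_le_add hmain (mul_le_mul_of_nonneg_right hmass hl0)

lemma cdOrder_of_put_le (hμ : FiniteFirstMoment μ) (hν : FiniteFirstMoment ν)
    (hmass : μ.real univ = ν.real univ) (hput : ∀ t, put μ t ≤ put ν t) : CDOrder μ ν := by
  intro φ hconv hanti hlin
  have := hμ.1
  have := hν.1
  have hcont := continuous_of_convexOn hconv
  have hlin' : ∀ n : ℕ, ∀ x, |max (φ x) (-(n : ℝ))| ≤ |φ x| := by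
    intro n x
    have hn : (0 : ℝ) ≤ n := n.cast_nonneg
    rcases le_total (φ x) (-(n : ℝ)) with h | h
    · rw [max_eq_right h, abs_of_nonpos (by linarith), abs_of_nonpos (by linarith)]
      linarith
    · rw [max_eq_left h]
  have hint : ∀ (ρ : Measure ℝ), FiniteFirstMoment ρ → ∀ n : ℕ,
      Integrable (fun x => max (φ x) (-(n : ℝ))) ρ := fun ρ hρ n =>
    (hρ.integrable_of_linearGrowth hcont hlin).mono (by fun_prop) (ae_of_all _ (hlin' n))
  have hlim : ∀ ρ : Measure ℝ, FiniteFirstMoment ρ →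
      Tendsto (fun n : ℕ => ∫ x, max (φ x) (-(n : ℝ)) ∂ρ) atTop (𝓝 (∫ x, φ x ∂ρ)) := by
    intro ρ hρ
    refine tendsto_integral_of_dominated_convergence (fun x => |φ x|)
      (fun n => (hint ρ hρ n).aestronglyMeasurable)
      (hρ.integrable_of_linearGrowth hcont hlin).abs
      (fun n => ae_of_all _ (hlin' n)) (ae_of_all _ fun x => ?_)
    refine tendsto_const_nhds.congr' ?_
    obtain ⟨N, hN⟩ := exists_nat_ge (-φ x)
    filter_upwards [eventually_ge_atTop N] with n hn
    have : (N : ℝ) ≤ n := by exact_mod_cast hn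
    exact (max_eq_left (by linarith)).symm
  refine le_of_tendsto_of_tendsto' (hlim μ hμ) (hlim ν hν) fun n => ?_
  obtain ⟨C, hC⟩ := hlin
  have h := pcdOrder_of_put_le hμ hν hmass.le hput (fun x => max (φ x) (-(n : ℝ)) + n)
    ((hconv.sup (convexOn_const _ convex_univ)).add_const _)
    (fun x y hxy => add_le_add (max_le_max (hanti hxy) le_rfl) le_rfl)
    (fun x => by linarith [le_max_right (φ x) (-(n : ℝ))])
    ⟨C + n, fun x => by
      have h1 := (abs_add_le (max (φ x) (-(n : ℝ))) n).trans
        (add_le_add ((hlin' n x).trans (hC x)) le_rfl)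
      rw [Nat.abs_cast] at h1
      nlinarith [mul_nonneg (n.cast_nonneg : (0 : ℝ) ≤ n) (abs_nonneg x)]⟩
  rw [integral_add (hint μ hμ n) (integrable_const _),
    integral_add (hint ν hν n) (integrable_const _), integral_const, integral_const, hmass] at h
  linarith

end Put

/-! ### Existence and additivity of the shadow -/

lemma le_of_affine_le {a k B : ℝ} (h : ∀ t : ℝ, 0 ≤ t → a * t ≤ k * t + B) : a ≤ k := by
  by_contra! hk
  have hpos : 0 < a - k := sub_pos.2 hk
  have h1 := h ((|B| + 1) / (a - k)) (by positivity)
  have h2 : (a - k) * ((|B| + 1) / (a - k)) = |B| + 1 := mul_div_cancel₀ _ hpos.ne'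
  nlinarith [le_abs_self B]

/-- The construction of the shadow `θ`: its complement `κ = ν - θ` in `ν` is the measure whose put
function is the convex envelope of `put ν - put μ`. -/
lemma exists_shadow_decomposition {μ ν : Measure ℝ} (hμ : FiniteFirstMoment μ)
    (hν : FiniteFirstMoment ν) (h : PCDOrder μ ν) :
    ∃ θ κ : Measure ℝ, θ + κ = ν ∧ θ.real univ = μ.real univ ∧ (∀ t, put μ t ≤ put θ t) ∧
      ∀ k : ℝ → ℝ, ConvexOn ℝ univ k → (∀ s, k s ≤ put ν s - put μ s) → ∀ t, k t ≤ put κ t := by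
  have := hμ.1
  have := hν.1
  set F : ℝ → ℝ := fun s => put ν s - put μ s with hF
  have hmin : ∀ s, 0 * s + 0 ≤ put ν s - put μ s := fun s => by
    linarith [h.put_le s]
  set c := convexEnvelope F with hc
  have hcF : ∀ t, c t ≤ put ν t - put μ t := convexEnvelope_le hmin
  have hc0 : ∀ t, 0 ≤ c t := fun t => by
    simpa using le_convexEnvelope_of_affine (F := F) hmin t
  have hp0 : ∀ t, 0 ≤ put ν t - c t := fun t => by
    linarith [hcF t, put_nonneg μ t]
  have hclim : Tendsto c atBot (𝓝 0) :=
    tendsto_of_tendsto_of_tendsto_of_le_of_le tendsto_const_nhds (tendsto_put_atBot hν) hc0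
      (fun t => by linarith [hcF t, put_nonneg μ t])
  have hplim : Tendsto (fun t => put ν t - c t) atBot (𝓝 0) := by
    simpa using (tendsto_put_atBot hν).sub hclim
  obtain ⟨κ, _, hκc⟩ := exists_measure_lput_eq (convexOn_convexEnvelope (F := F) hmin) hclim
  obtain ⟨θ, _, hθp⟩ := exists_measure_lput_eq
    (convexOn_sub_convexEnvelope (convexOn_put hν) (convexOn_put hμ) hmin) hplim
  have hsum : θ + κ = ν := by
    refine eq_of_lput_eq (fun t => by rw [lput_eq_ofReal_put hν]; exact ENNReal.ofReal_ne_top)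
      fun t => ?_
    rw [lput, lintegral_add_measure, ← lput, ← lput, hθp, hκc,
      ← ENNReal.ofReal_add (hp0 t) (hc0 t), lput_eq_ofReal_put hν]
    congr 1
    ring
  have hκ : FiniteFirstMoment κ := hν.mono (hsum ▸ Measure.le_add_left le_rfl)
  have hθ : FiniteFirstMoment θ := hν.mono (hsum ▸ Measure.le_add_right le_rfl)
  have := hκ.1
  have := hθ.1
  have hputκ : ∀ t, put κ t = c t := fun t => by
    have := hκc t
    rwa [lput_eq_ofReal_put hκ, ENNReal.ofReal_eq_ofReal_iff (put_nonneg _ _) (hc0 t)] at this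
  have hputθ : ∀ t, put θ t = put ν t - c t := fun t => by
    have := hθp t
    rwa [lput_eq_ofReal_put hθ, ENNReal.ofReal_eq_ofReal_iff (put_nonneg _ _) (hp0 t)] at this
  refine ⟨θ, κ, hsum, ?_, fun t => ?_, fun k hk hkF t => ?_⟩
  · have hmass : θ.real univ + κ.real univ = ν.real univ := by
      rw [← hsum, measureReal_add_apply]
    -- The slope of `put ρ` at `+∞` is the mass of `ρ`. The envelope has there the slope `m` of
    -- `put ν - put μ`, since it lies above some affine minorant of slope `m`.
    set Aμ := ∫ s, |s| ∂μ with hAμ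
    set Aν := ∫ s, |s| ∂ν with hAν
    set m := ν.real univ - μ.real univ with hm
    have hm0 : 0 ≤ m := sub_nonneg.2 h.mass_le
    have hAμ0 : 0 ≤ Aμ := integral_nonneg fun _ => abs_nonneg _
    have hAν0 : 0 ≤ Aν := integral_nonneg fun _ => abs_nonneg _
    have hκle : κ.real univ ≤ m := by
      refine le_of_affine_le (B := Aν + Aμ + ∫ s, |s| ∂κ) fun t ht => ?_
      have h1 := put_lower hκ t
      have h2 := put_upper hν ht
      have h3 := put_lower hμ t
      have h4 := hcF t
      rw [hputκ] at h1
      rw [hm, sub_mul]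
      linarith
    have hκge : m ≤ κ.real univ := by
      have haff : ∀ s, m * s + (-(Aν + Aμ)) ≤ F s := by
        intro s
        rcases le_total 0 s with hs | hs
        · have h2 := put_lower hν s
          have h3 := put_upper hμ hs
          rw [hm, sub_mul]
          simp only [hF]
          linarith
        · have := mul_nonpos_of_nonneg_of_nonpos hm0 hs
          have := h.put_le s
          simp only [hF]
          linarith
      refine le_of_affine_le (B := Aν + Aμ + ∫ s, |s| ∂κ) fun t ht => ?_
      have h1 := le_convexEnvelope_of_affine haff t
      have h2 := put_upper hκ ht
      rw [hputκ] at h2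
      linarith
    linarith
  · rw [hputθ]
    linarith [hcF t]
  · rw [hputκ]
    exact le_convexEnvelope hk hkF t

/-- Maximality of `put κ` among the convex minorants of `put ν - put μ` makes `θ = ν - κ` the
shadow, because a competitor `θ'` gives the convex minorant `put (ν - θ')`. -/
lemma isShadow_of_decomposition {μ ν θ κ : Measure ℝ} (hμ : FiniteFirstMoment μ)
    (hν : FiniteFirstMoment ν) (hsum : θ + κ = ν) (hmass : θ.real univ = μ.real univ)
    (hput : ∀ t, put μ t ≤ put θ t)
    (hmax : ∀ k : ℝ → ℝ, ConvexOn ℝ univ k → (∀ s, k s ≤ put ν s - put μ s) →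
      ∀ t, k t ≤ put κ t) : IsShadow μ ν θ := by
  have hκ : FiniteFirstMoment κ := hν.mono (hsum ▸ Measure.le_add_left le_rfl)
  have hθν : θ ≤ ν := hsum ▸ Measure.le_add_right le_rfl
  have hθ : FiniteFirstMoment θ := hν.mono hθν
  refine ⟨hθ, cdOrder_of_put_le hμ hθ hmass.symm hput, hθν, fun θ' hθ' hcd hle => ?_⟩
  have := hθ'.1
  refine cdOrder_of_put_le hθ hθ' (hmass.trans hcd.mass_eq) fun t => ?_
  have hκ' : FiniteFirstMoment (ν - θ') := hν.mono Measure.sub_le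
  have hadd' : ∀ s, put ν s = put (ν - θ') s + put θ' s := fun s => by
    rw [← put_add hκ' hθ', Measure.sub_add_cancel_of_le hle]
  have hadd : put ν t = put θ t + put κ t := by rw [← put_add hθ hκ, hsum]
  have := hmax (put (ν - θ')) (convexOn_put hκ')
    (fun s => by linarith [hadd' s, hcd.pcd.put_le s]) t
  linarith [hadd' t, hadd]

/-- Proposition 5.5, additivity of the shadow. If `μ₁ + μ₂ ≤_pcd ν`,
then `μ₂ ≤_pcd ν − S^ν(μ₁)` and `S^ν(μ₁ + μ₂) = S^ν(μ₁) + S^{ν − S^ν(μ₁)}(μ₂)`. -/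
theorem shadow_additivity
    (μ₁ μ₂ ν : Measure ℝ)
    (hμ₁ : FiniteFirstMoment μ₁) (hμ₂ : FiniteFirstMoment μ₂)
    (hν : FiniteFirstMoment ν)
    (h : PCDOrder (μ₁ + μ₂) ν) :
    ∃ θ₁ : Measure ℝ, IsShadow μ₁ ν θ₁ ∧
      PCDOrder μ₂ (ν - θ₁) ∧
      ∃ θ₂ : Measure ℝ, IsShadow μ₂ (ν - θ₁) θ₂ ∧
        IsShadow (μ₁ + μ₂) ν (θ₁ + θ₂) := by
  have hμ₁ν : PCDOrder μ₁ ν := by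
    have := hμ₁.1
    have := hμ₂.1
    refine pcdOrder_of_put_le hμ₁ hν ?_ fun t => ?_
    · have := h.mass_le
      rw [measureReal_add_apply] at this
      linarith [measureReal_nonneg (μ := μ₂) (s := univ)]
    · have := h.put_le t
      rw [put_add hμ₁ hμ₂] at this
      linarith [put_nonneg μ₂ t]
  obtain ⟨θ₁, κ₁, hsum₁, hmass₁, hput₁, hmax₁⟩ := exists_shadow_decomposition hμ₁ hν hμ₁ν
  have hθ₁ : FiniteFirstMoment θ₁ := hν.mono (hsum₁ ▸ Measure.le_add_right le_rfl)
  have hκ₁ : FiniteFirstMoment κ₁ := hν.mono (hsum₁ ▸ Measure.le_add_left le_rfl)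
  have := hμ₁.1
  have := hμ₂.1
  have := hθ₁.1
  have := hκ₁.1
  have hsub : ν - θ₁ = κ₁ := by
    rw [← hsum₁, add_comm, Measure.add_sub_cancel]
  have hpcd₂ : PCDOrder μ₂ κ₁ := by
    refine pcdOrder_of_put_le hμ₂ hκ₁ ?_ ?_
    · have h1 := h.mass_le
      rw [← hsum₁, measureReal_add_apply, measureReal_add_apply] at h1
      linarith
    · -- `put μ₂` is a convex minorant of `put ν - put μ₁`
      refine hmax₁ _ (convexOn_put hμ₂) fun s => ?_
      have := h.put_le s
      rw [put_add hμ₁ hμ₂] at this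
      linarith
  obtain ⟨θ₂, κ₂, hsum₂, hmass₂, hput₂, hmax₂⟩ := exists_shadow_decomposition hμ₂ hκ₁ hpcd₂
  have hθ₂ : FiniteFirstMoment θ₂ := hκ₁.mono (hsum₂ ▸ Measure.le_add_right le_rfl)
  have := hθ₂.1
  refine ⟨θ₁, isShadow_of_decomposition hμ₁ hν hsum₁ hmass₁ hput₁ hmax₁, hsub ▸ hpcd₂, θ₂,
    hsub ▸ isShadow_of_decomposition hμ₂ hκ₁ hsum₂ hmass₂ hput₂ hmax₂, ?_⟩
  refine isShadow_of_decomposition (κ := κ₂) (hμ₁.add hμ₂) hν (by rw [add_assoc, hsum₂, hsum₁])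
    (by rw [measureReal_add_apply, measureReal_add_apply, hmass₁, hmass₂])
    (fun t => by rw [put_add hμ₁ hμ₂, put_add hθ₁ hθ₂]; exact add_le_add (hput₁ t) (hput₂ t)) ?_
  intro k hk hkF
  -- `k + put μ₂` is a convex minorant of `put ν - put μ₁`, hence lies below `put κ₁`
  refine hmax₂ k hk fun s => ?_
  have := hmax₁ (k + put μ₂) (hk.add (convexOn_put hμ₂)) (fun r => by
    have := hkF r
    rw [put_add hμ₁ hμ₂] at this
    simp only [Pi.add_apply]
    linarith) s
  simp only [Pi.add_apply] at this
  linarith
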